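/- Let F > 0 and λ > Λ(A,B,F). Then φ_λ'(t) < 0 for every t > 0; in particular φ_λ is strictly decreasing on (0,∞) and has no critical points there. -/

import Mathlib

/-!
Factoring gives `φ_λ'(t) = t^(q-1) (A t^(p-q) - λ B - F t^(γ-q))`, so everything reduces to
`A t^(p-q) - F t^(γ-q) ≤ B Λ(A,B,F)` for `t > 0` (`fiber_young`).  With `a = p - q` and
`b = γ - p`, this is weighted AM-GM with weights `a/(a+b)` and `b/(a+b)`, applied to
`F t^(a+b) / (a/(a+b))` and `B Λ / (b/(a+b))`: their weighted geometric mean is exactly `A t^a`.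
-/

open Real Filter Topology Set

/-- The fiber map `φ_λ(t) = (A/p) t^p − (λB/q) t^q − (F/γ) t^γ`. -/
noncomputable def phi (p q γ A B F lam : ℝ) : ℝ → ℝ :=
  fun t => A / p * t ^ p - lam * B / q * t ^ q - F / γ * t ^ γ

/-- The extremal value `Λ(A,B,F)`. -/
noncomputable def Lam (p q γ A B F : ℝ) : ℝ :=
  (γ - p) / (γ - q) * ((p - q) / (γ - q)) ^ ((p - q) / (γ - p)) *
    A ^ ((γ - q) / (γ - p)) / (B * F ^ ((p - q) / (γ - p)))

/-- The right-hand constant is the maximum over `t > 0` of `A t^a - F t^(a+b)`. -/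
lemma fiber_young {a b A F t : ℝ} (ha : 0 < a) (hb : 0 < b) (hA : 0 < A) (hF : 0 < F)
    (ht : 0 < t) :
    A * t ^ a - F * t ^ (a + b) ≤
      b / (a + b) * ((a / (a + b)) ^ (a / b) * A ^ ((a + b) / b) / F ^ (a / b)) := by
  have hc : 0 < a + b := by positivity
  have hw : 0 < a / (a + b) := by positivity
  set w := a / (a + b) with hwdef
  set Y := w ^ (a / b) * A ^ ((a + b) / b) / F ^ (a / b) with hY
  have hYpow : Y ^ (b / (a + b)) = w ^ w * A / F ^ w := by
    have e1 : a / b * (b / (a + b)) = w := by rw [hwdef]; field_simp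
    have e2 : (a + b) / b * (b / (a + b)) = 1 := by field_simp
    rw [hY, Real.div_rpow (by positivity) (by positivity),
      Real.mul_rpow (by positivity) (by positivity), ← Real.rpow_mul hw.le,
      ← Real.rpow_mul hA.le, ← Real.rpow_mul hF.le, e1, e2, Real.rpow_one]
  have hXpow : (F * t ^ (a + b) / w) ^ w = F ^ w * t ^ a / w ^ w := by
    have e : (a + b) * w = a := by rw [hwdef]; field_simp
    rw [Real.div_rpow (by positivity) hw.le, Real.mul_rpow hF.le (by positivity),
      ← Real.rpow_mul ht.le, e]
  have h := Real.geom_mean_le_arith_mean2_weighted (w₁ := w) (w₂ := b / (a + b))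
    (p₁ := F * t ^ (a + b) / w) (p₂ := Y) hw.le (by positivity) (by positivity)
    (by positivity) (by rw [hwdef]; field_simp)
  have h1 : 0 < F ^ w := by positivity
  have h2 : 0 < w ^ w := by positivity
  have e3 : F ^ w * t ^ a / w ^ w * (w ^ w * A / F ^ w) = A * t ^ a := by
    field_simp
  rw [hXpow, hYpow, e3, mul_div_cancel₀ _ hw.ne'] at h
  linarith

lemma hasDerivAt_phi {p q γ : ℝ} (A B F lam : ℝ) {t : ℝ} (hp : p ≠ 0) (hq : q ≠ 0) (hγ : γ ≠ 0)
    (ht : 0 < t) :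
    HasDerivAt (phi p q γ A B F lam)
      (t ^ (q - 1) * (A * t ^ (p - q) - lam * B - F * t ^ (γ - q))) t := by
  have d (r : ℝ) : HasDerivAt (fun x : ℝ => x ^ r) (r * t ^ (r - 1)) t :=
    Real.hasDerivAt_rpow_const (Or.inl ht.ne')
  have h := (((d p).const_mul (A / p)).sub ((d q).const_mul (lam * B / q))).sub
    ((d γ).const_mul (F / γ))
  refine h.congr_deriv ?_
  have e1 : t ^ (p - 1) = t ^ (q - 1) * t ^ (p - q) := by
    rw [← Real.rpow_add ht]; congr 1; ring
  have e2 : t ^ (γ - 1) = t ^ (q - 1) * t ^ (γ - q) := by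
    rw [← Real.rpow_add ht]; congr 1; ring
  rw [e1, e2]
  field_simp

/-- for `F > 0` and `λ > Λ(A,B,F)`, `φ_λ'(t) < 0` for all `t > 0`; in
particular `φ_λ` is strictly decreasing on `(0,∞)` and has no critical points there. -/
theorem fiber_map_beyond_extremal (p q γ A B F lam : ℝ)
    (hq : 1 < q) (hqp : q < p) (hpγ : p < γ)
    (hA : 0 < A) (hB : 0 < B) (hF : 0 < F)
    (hlam : Lam p q γ A B F < lam) :
    (∀ t : ℝ, 0 < t → deriv (phi p q γ A B F lam) t < 0) ∧
    StrictAntiOn (phi p q γ A B F lam) (Set.Ioi 0) ∧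
    ∀ t : ℝ, 0 < t → deriv (phi p q γ A B F lam) t ≠ 0 := by
  have hd (t : ℝ) (ht : 0 < t) := hasDerivAt_phi (p := p) (q := q) (γ := γ) A B F lam
    (by linarith) (by linarith) (by linarith) ht
  have hneg : ∀ t : ℝ, 0 < t → deriv (phi p q γ A B F lam) t < 0 := by
    intro t ht
    rw [(hd t ht).deriv]
    refine mul_neg_of_pos_of_neg (by positivity) ?_
    have hy := fiber_young (sub_pos.2 hqp) (sub_pos.2 hpγ) hA hF ht
    have hs : p - q + (γ - p) = γ - q := by ring
    rw [hs] at hy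
    have hL : Lam p q γ A B F * B = (γ - p) / (γ - q) * (((p - q) / (γ - q)) ^ ((p - q) / (γ - p))
        * A ^ ((γ - q) / (γ - p)) / F ^ ((p - q) / (γ - p))) := by
      have hFp : 0 < F ^ ((p - q) / (γ - p)) := by positivity
      unfold Lam
      generalize F ^ ((p - q) / (γ - p)) = G at *
      generalize ((p - q) / (γ - q)) ^ ((p - q) / (γ - p)) = H at *
      generalize A ^ ((γ - q) / (γ - p)) = K at *
      field_simp
    have := mul_lt_mul_of_pos_right hlam hB
    linarith
  refine ⟨hneg, ?_, fun t ht => (hneg t ht).ne⟩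
  refine strictAntiOn_of_deriv_neg (convex_Ioi 0)
    (fun t ht => (hd t ht).continuousAt.continuousWithinAt) ?_
  intro t ht
  rw [interior_Ioi] at ht
  exact hneg t ht
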